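/- arXiv:2110.01152 — 8 statements merged into one kernel-verified Lean document; each statement's English description precedes it below -/
import Mathlib

section
/- The optimal-cost function is convex in the fairness level: if θ_a and θ_b are real numbers for which θ_a-fair and θ_b-fair probabilistic matchings exist, then for every λ ∈ [0,1] a (λθ_a + (1−λ)θ_b)-fair probabilistic matching exists and F(λθ_a + (1−λ)θ_b) ≤ λ·F(θ_a) + (1−λ)·F(θ_b). -/
/-!
The fairness constraints and the expected cost are linear in `(θ, p)`, so the pairs `(θ, c)` for
which some `θ`-fair probabilistic matching has expected cost `c` form a convex region of the plane,
and `F` is the lower boundary of that region. Slices of a convex set satisfy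
`a • S_x + b • S_y ⊆ S_{a x + b y}`; taking infima, which commute with sums and nonnegative
scalings, shows that every lower boundary is convex. Compactness of the simplex keeps the infima
finite.
-/

/-- `p` is a probabilistic matching over `η` deterministic matchings. -/
def IsProbMatching (η : ℕ) (p : Fin η → ℝ) : Prop :=
  (∀ ℓ, 0 ≤ p ℓ) ∧ ∑ ℓ, p ℓ = 1

/-- `p` is `θ`-fair: every rider is matched with probability at least `θ`. -/
def IsFair (m η : ℕ) (M : Fin m → Fin η → ℝ) (θ : ℝ) (p : Fin η → ℝ) : Prop :=
  ∀ r, θ ≤ ∑ ℓ, M r ℓ * p ℓ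

/-- `F θ`: the infimum of the expected cost over all `θ`-fair probabilistic matchings. -/
noncomputable def F (m η : ℕ) (M : Fin m → Fin η → ℝ) (cost : Fin η → ℝ) (θ : ℝ) : ℝ :=
  sInf {c : ℝ | ∃ p : Fin η → ℝ,
    IsProbMatching η p ∧ IsFair m η M θ p ∧ ∑ ℓ, cost ℓ * p ℓ = c}

open scoped Pointwise Matrix

theorem convexOn_sInf_slice {E : Type*} [AddCommMonoid E] [Module ℝ E] {S : Set (E × ℝ)}
    (hS : Convex ℝ S) (hbdd : ∀ x, BddBelow {c | (x, c) ∈ S}) :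
    ConvexOn ℝ (Prod.fst '' S) fun x => sInf {c | (x, c) ∈ S} := by
  refine ⟨hS.linear_image (LinearMap.fst ℝ E ℝ), ?_⟩
  rintro _ ⟨⟨x, c⟩, hc, rfl⟩ _ ⟨⟨y, d⟩, hd, rfl⟩ a b ha hb hab
  let slice (z : E) : Set ℝ := {c | (z, c) ∈ S}
  have hx : (a • slice x).Nonempty := Set.Nonempty.smul_set ⟨c, hc⟩
  have hy : (b • slice y).Nonempty := Set.Nonempty.smul_set ⟨d, hd⟩
  have slice_subset : a • slice x + b • slice y ⊆ slice (a • x + b • y) := by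
    rintro _ ⟨_, ⟨u, hu, rfl⟩, _, ⟨v, hv, rfl⟩, rfl⟩
    exact hS hu hv ha hb hab
  calc sInf (slice (a • x + b • y))
      ≤ sInf (a • slice x + b • slice y) := csInf_le_csInf (hbdd _) (hx.add hy) slice_subset
    _ = sInf (a • slice x) + sInf (b • slice y) :=
      csInf_add hx ((hbdd x).smul_of_nonneg ha) hy ((hbdd y).smul_of_nonneg hb)
    _ = a • sInf (slice x) + b • sInf (slice y) := by
      rw [Real.sInf_smul_of_nonneg ha, Real.sInf_smul_of_nonneg hb]

section FairCostRegion

variable {m η : ℕ} {M : Fin m → Fin η → ℝ}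

theorem isProbMatching_iff_mem_stdSimplex {p : Fin η → ℝ} :
    IsProbMatching η p ↔ p ∈ stdSimplex ℝ (Fin η) :=
  Iff.rfl

theorem IsFair.smul_add_smul {θ θ' a b : ℝ} {p q : Fin η → ℝ} (hp : IsFair m η M θ p)
    (hq : IsFair m η M θ' q) (ha : 0 ≤ a) (hb : 0 ≤ b) :
    IsFair m η M (a * θ + b * θ') (a • p + b • q) := fun r =>
  calc a * θ + b * θ'
      ≤ a * (M r ⬝ᵥ p) + b * (M r ⬝ᵥ q) := by gcongr; exacts [hp r, hq r]
    _ = M r ⬝ᵥ (a • p + b • q) := by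
      simp only [dotProduct_add, dotProduct_smul, smul_eq_mul]

variable (m η M) (cost : Fin η → ℝ)

/-- The region of pairs `(θ, c)` such that some `θ`-fair probabilistic matching has expected cost
exactly `c`. Its slice at `θ` is the set whose infimum defines `F θ`, and its projection to the
first coordinate is the set of feasible fairness levels. -/
def fairCostRegion : Set (ℝ × ℝ) :=
  {x | ∃ p : Fin η → ℝ, IsProbMatching η p ∧ IsFair m η M x.1 p ∧ ∑ ℓ, cost ℓ * p ℓ = x.2}

theorem fst_image_fairCostRegion :
    Prod.fst '' fairCostRegion m η M cost =
      {θ | ∃ p : Fin η → ℝ, IsProbMatching η p ∧ IsFair m η M θ p} := by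
  ext θ
  constructor
  · rintro ⟨_, ⟨p, hp, hfair, -⟩, rfl⟩
    exact ⟨p, hp, hfair⟩
  · rintro ⟨p, hp, hfair⟩
    exact ⟨(θ, _), ⟨p, hp, hfair, rfl⟩, rfl⟩

theorem convex_fairCostRegion : Convex ℝ (fairCostRegion m η M cost) := by
  rintro ⟨θ, _⟩ ⟨p, hp, hpfair, rfl⟩ ⟨θ', _⟩ ⟨q, hq, hqfair, rfl⟩ a b ha hb hab
  rw [isProbMatching_iff_mem_stdSimplex] at hp hq
  refine ⟨a • p + b • q, convex_stdSimplex ℝ (Fin η) hp hq ha hb hab,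
    hpfair.smul_add_smul hqfair ha hb, ?_⟩
  change cost ⬝ᵥ (a • p + b • q) = a • (cost ⬝ᵥ p) + b • (cost ⬝ᵥ q)
  rw [dotProduct_add, dotProduct_smul, dotProduct_smul]

theorem bddBelow_slice_fairCostRegion (θ : ℝ) :
    BddBelow {c | (θ, c) ∈ fairCostRegion m η M cost} := by
  have hcont : Continuous fun p : Fin η → ℝ => ∑ ℓ, cost ℓ * p ℓ := by fun_prop
  refine ((isCompact_stdSimplex ℝ (Fin η)).bddBelow_image hcont.continuousOn).mono ?_
  rintro _ ⟨p, hp, -, rfl⟩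
  exact Set.mem_image_of_mem _ (isProbMatching_iff_mem_stdSimplex.1 hp)

theorem F_convex_in_fairness_general :
    ConvexOn ℝ {θ | ∃ p : Fin η → ℝ, IsProbMatching η p ∧ IsFair m η M θ p}
      (F m η M cost) := by
  rw [← fst_image_fairCostRegion m η M cost]
  exact convexOn_sInf_slice (convex_fairCostRegion m η M cost)
    (bddBelow_slice_fairCostRegion m η M cost)

end FairCostRegion

/-- The optimal-cost function `F` is convex in the fairness level. -/
theorem F_convex_in_fairness
    (m η : ℕ) (hm : 1 ≤ m) (hη : 1 ≤ η)
    (M : Fin m → Fin η → ℝ) (hM : ∀ r ℓ, M r ℓ = 0 ∨ M r ℓ = 1)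
    (cost : Fin η → ℝ)
    (θa θb : ℝ)
    (ha : ∃ p : Fin η → ℝ, IsProbMatching η p ∧ IsFair m η M θa p)
    (hb : ∃ p : Fin η → ℝ, IsProbMatching η p ∧ IsFair m η M θb p)
    (lam : ℝ) (hlam0 : 0 ≤ lam) (hlam1 : lam ≤ 1) :
    (∃ p : Fin η → ℝ, IsProbMatching η p ∧
        IsFair m η M (lam * θa + (1 - lam) * θb) p) ∧
    F m η M cost (lam * θa + (1 - lam) * θb)
      ≤ lam * F m η M cost θa + (1 - lam) * F m η M cost θb := by
  have hF := F_convex_in_fairness_general m η M cost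
  exact ⟨hF.1 ha hb hlam0 (sub_nonneg.2 hlam1) (add_sub_cancel lam 1),
    hF.2 ha hb hlam0 (sub_nonneg.2 hlam1) (add_sub_cancel lam 1)⟩
end

section
/- The optimal-cost function is piecewise linear: there exists a finite family of pairs (a_i, b_i) of real numbers such that for every θ for which a θ-fair probabilistic matching exists, F(θ) equals the maximum over i of the affine value a_i + b_i·θ. -/
open Set
open scoped Pointwise

/-- A polyhedron: the common solution set of finitely many affine inequalities, each encoded by an
affine function required to be nonpositive. -/
def IsPolyhedral (𝕜 : Type*) {V : Type*} [Field 𝕜] [LinearOrder 𝕜] [AddCommGroup V]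
    [Module 𝕜 V] (S : Set V) : Prop :=
  ∃ s : Set (V →ᵃ[𝕜] 𝕜), s.Finite ∧ S = {x | ∀ f ∈ s, f x ≤ 0}

/-- The Fourier–Motzkin system of `s` in the direction `v`, whose solutions are the points that can
be moved along `v` to a solution of `s`. Each member is constant along `v`: it is either already so
in `s`, or a nonnegative combination of an inequality bounding the motion from above with one
bounding it from below. -/
def fourierMotzkin {𝕜 V : Type*} [Field 𝕜] [LinearOrder 𝕜] [AddCommGroup V] [Module 𝕜 V]
    (s : Set (V →ᵃ[𝕜] 𝕜)) (v : V) : Set (V →ᵃ[𝕜] 𝕜) :=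
  {f ∈ s | f.linear v = 0} ∪
    image2 (fun f g => f.linear v • g - g.linear v • f)
      {f ∈ s | 0 < f.linear v} {g ∈ s | g.linear v < 0}

lemma exists_forall_le_and_forall_le_of_finite {α : Type*} [LinearOrder α] [Nonempty α]
    {L U : Set α} (hL : L.Finite) (hU : U.Finite) (h : ∀ l ∈ L, ∀ u ∈ U, l ≤ u) :
    ∃ t, (∀ l ∈ L, l ≤ t) ∧ ∀ u ∈ U, t ≤ u := by
  rcases L.eq_empty_or_nonempty with rfl | hne
  · obtain ⟨t, ht⟩ := hU.bddBelow
    exact ⟨t, by simp, fun u hu => ht hu⟩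
  · obtain ⟨l, hl, hmax⟩ := exists_max_image L id hL hne
    exact ⟨l, hmax, h l hl⟩

lemma exists_fin_sup'_eq {α β : Type*} [SemilatticeSup β] {s : Finset α} (hs : s.Nonempty) :
    ∃ (n : ℕ) (e : Fin (n + 1) → α), ∀ f : α → β,
      s.sup' hs f = Finset.univ.sup' Finset.univ_nonempty (f ∘ e) := by
  classical
  obtain ⟨n, hn⟩ := Nat.exists_eq_succ_of_ne_zero hs.card_pos.ne'
  let e : Fin (n + 1) ≃ s := (s.equivFinOfCardEq hn).symm
  have hrange : s = Finset.univ.image fun i => (e i : α) := by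
    ext x
    simpa using ⟨fun hx => ⟨e.symm ⟨x, hx⟩, by simp⟩, fun ⟨i, hi⟩ => hi ▸ (e i).2⟩
  refine ⟨n, fun i => e i, fun f => ?_⟩
  simp only [← Finset.sup'_image (Finset.univ_nonempty.image _), ← hrange]

section Affine

variable {𝕜 V : Type*} [Field 𝕜] [AddCommGroup V] [Module 𝕜 V]

lemma affineMap_add_smul (f : V →ᵃ[𝕜] 𝕜) (x v : V) (t : 𝕜) :
    f (x + t • v) = f x + t * f.linear v := by
  rw [add_comm x, ← vadd_eq_add, f.map_vadd, map_smul, vadd_eq_add, smul_eq_mul, add_comm]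

variable [LinearOrder 𝕜]

lemma fourierMotzkin_finite {s : Set (V →ᵃ[𝕜] 𝕜)} (hs : s.Finite) (v : V) :
    (fourierMotzkin s v).Finite :=
  (hs.sep _).union ((hs.sep _).image2 _ (hs.sep _))

variable [IsStrictOrderedRing 𝕜]

lemma affineMap_add_smul_nonpos_iff_of_pos {f : V →ᵃ[𝕜] 𝕜} {v : V} (hf : 0 < f.linear v)
    (x : V) (t : 𝕜) : f (x + t • v) ≤ 0 ↔ t ≤ -f x / f.linear v := by
  rw [affineMap_add_smul, le_div_iff₀ hf, le_neg_iff_add_nonpos_left]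

lemma affineMap_add_smul_nonpos_iff_of_neg {f : V →ᵃ[𝕜] 𝕜} {v : V} (hf : f.linear v < 0)
    (x : V) (t : 𝕜) : f (x + t • v) ≤ 0 ↔ -f x / f.linear v ≤ t := by
  rw [affineMap_add_smul, div_le_iff_of_neg hf, le_neg_iff_add_nonpos_left]

lemma nonpos_of_mem_fourierMotzkin {s : Set (V →ᵃ[𝕜] 𝕜)} {v x : V} {t : 𝕜}
    (ht : ∀ f ∈ s, f (x + t • v) ≤ 0) {h : V →ᵃ[𝕜] 𝕜} (hh : h ∈ fourierMotzkin s v) :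
    h x ≤ 0 := by
  rcases hh with ⟨hs, hv⟩ | ⟨f, ⟨hf, hfv⟩, g, ⟨hg, hgv⟩, rfl⟩
  · simpa [affineMap_add_smul, hv] using ht h hs
  · calc f.linear v * g x - g.linear v * f x
        = f.linear v * g (x + t • v) + -g.linear v * f (x + t • v) := by
          simp only [affineMap_add_smul]
          ring
      _ ≤ 0 := add_nonpos (mul_nonpos_of_nonneg_of_nonpos hfv.le (ht g hg))
          (mul_nonpos_of_nonneg_of_nonpos (neg_nonneg.2 hgv.le) (ht f hf))

lemma exists_add_smul_nonpos_of_fourierMotzkin {s : Set (V →ᵃ[𝕜] 𝕜)} (hs : s.Finite) {v x : V}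
    (hx : ∀ h ∈ fourierMotzkin s v, h x ≤ 0) : ∃ t : 𝕜, ∀ f ∈ s, f (x + t • v) ≤ 0 := by
  have lower_le_upper : ∀ l ∈ (fun g => -g x / g.linear v) '' {g ∈ s | g.linear v < 0},
      ∀ u ∈ (fun f => -f x / f.linear v) '' {f ∈ s | 0 < f.linear v}, l ≤ u := by
    rintro _ ⟨g, ⟨hg, hgv⟩, rfl⟩ _ ⟨f, ⟨hf, hfv⟩, rfl⟩
    have hfg : f.linear v * g x - g.linear v * f x ≤ 0 :=
      hx _ (Or.inr ⟨f, ⟨hf, hfv⟩, g, ⟨hg, hgv⟩, rfl⟩)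
    rw [div_le_iff_of_neg hgv, div_mul_eq_mul_div, div_le_iff₀ hfv]
    linarith
  obtain ⟨t, hlower, hupper⟩ := exists_forall_le_and_forall_le_of_finite
    ((hs.sep _).image _) ((hs.sep _).image _) lower_le_upper
  refine ⟨t, fun f hf => ?_⟩
  rcases lt_trichotomy (f.linear v) 0 with hv | hv | hv
  · exact (affineMap_add_smul_nonpos_iff_of_neg hv x t).2 (hlower _ ⟨f, ⟨hf, hv⟩, rfl⟩)
  · simpa [affineMap_add_smul, hv] using hx f (Or.inl ⟨hf, hv⟩)
  · exact (affineMap_add_smul_nonpos_iff_of_pos hv x t).2 (hupper _ ⟨f, ⟨hf, hv⟩, rfl⟩)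

lemma forall_add_smul_nonpos_iff_of_le {s : Set (V →ᵃ[𝕜] 𝕜)} {v x : V} {t t₀ : 𝕜}
    (ht₀ : ∀ f ∈ s, f (x + t₀ • v) ≤ 0) (ht : t ≤ t₀) :
    (∀ f ∈ s, f (x + t • v) ≤ 0) ↔ ∀ f ∈ s, f.linear v < 0 → -f x / f.linear v ≤ t := by
  refine forall₂_congr fun f hf => ?_
  rcases lt_or_ge (f.linear v) 0 with hv | hv
  · simp only [affineMap_add_smul_nonpos_iff_of_neg hv, hv, forall_const]
  · have hle : f (x + t • v) ≤ f (x + t₀ • v) := by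
      simp only [affineMap_add_smul]
      gcongr
    simp only [hle.trans (ht₀ f hf), hv.not_gt, IsEmpty.forall_iff]

end Affine

section Polyhedral

variable {𝕜 V W : Type*} [Field 𝕜] [LinearOrder 𝕜]
  [AddCommGroup V] [Module 𝕜 V] [AddCommGroup W] [Module 𝕜 W]

lemma IsPolyhedral.inter {S T : Set V} (hS : IsPolyhedral 𝕜 S) (hT : IsPolyhedral 𝕜 T) :
    IsPolyhedral 𝕜 (S ∩ T) := by
  obtain ⟨s, hs, rfl⟩ := hS
  obtain ⟨t, ht, rfl⟩ := hT
  refine ⟨s ∪ t, hs.union ht, ?_⟩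
  simp only [mem_union, or_imp, forall_and, ofPred_and]

lemma isPolyhedral_iInter {ι : Sort*} [Finite ι] {S : ι → Set V}
    (hS : ∀ i, IsPolyhedral 𝕜 (S i)) : IsPolyhedral 𝕜 (⋂ i, S i) := by
  choose s hs hS using hS
  refine ⟨⋃ i, s i, finite_iUnion hs, ?_⟩
  ext x
  simp only [hS, mem_iInter, mem_iUnion, mem_ofPred_eq, forall_exists_index]
  exact forall_comm

lemma IsPolyhedral.preimage {S : Set V} (hS : IsPolyhedral 𝕜 S) (g : W →ᵃ[𝕜] V) :
    IsPolyhedral 𝕜 (g ⁻¹' S) := by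
  obtain ⟨s, hs, rfl⟩ := hS
  refine ⟨(fun f => f.comp g) '' s, hs.image _, ?_⟩
  simp only [preimage_ofPred_eq, forall_mem_image, AffineMap.comp_apply]

variable [IsStrictOrderedRing 𝕜]

lemma isPolyhedral_setOf_le (f g : V →ᵃ[𝕜] 𝕜) : IsPolyhedral 𝕜 {x | f x ≤ g x} :=
  ⟨{f - g}, finite_singleton _, by simp⟩

lemma isPolyhedral_setOf_eq (f g : V →ᵃ[𝕜] 𝕜) : IsPolyhedral 𝕜 {x | f x = g x} := by
  simpa only [le_antisymm_iff, ofPred_and] using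
    (isPolyhedral_setOf_le f g).inter (isPolyhedral_setOf_le g f)

lemma IsPolyhedral.add_span_singleton {S : Set V} (hS : IsPolyhedral 𝕜 S) (v : V) :
    IsPolyhedral 𝕜 (S + (Submodule.span 𝕜 {v} : Set V)) := by
  obtain ⟨s, hs, rfl⟩ := hS
  refine ⟨fourierMotzkin s v, fourierMotzkin_finite hs v, Subset.antisymm ?_ fun x hx => ?_⟩
  · rintro _ ⟨y, hy, w, hw, rfl⟩
    obtain ⟨t, rfl⟩ := Submodule.mem_span_singleton.1 hw
    refine fun h hh => nonpos_of_mem_fourierMotzkin (t := -t) ?_ hh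
    simpa using hy
  · obtain ⟨t, ht⟩ := exists_add_smul_nonpos_of_fourierMotzkin hs hx
    exact ⟨x + t • v, ht, -t • v, Submodule.smul_mem _ _ (Submodule.mem_span_singleton_self v),
      by simp⟩

lemma IsPolyhedral.add_submodule {S : Set V} (hS : IsPolyhedral 𝕜 S) {K : Submodule 𝕜 V}
    (hK : K.FG) : IsPolyhedral 𝕜 (S + (K : Set V)) := by
  induction K, hK using Submodule.fg_induction generalizing S with
  | singleton v => exact hS.add_span_singleton v
  | sup K L _ _ ihK ihL =>
    rw [Submodule.coe_sup, ← add_assoc]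
    exact ihL (ihK hS)

-- The projection to `V` is the section by `V × 0` of the sum with `0 × W`.
lemma IsPolyhedral.image_fst [Module.Finite 𝕜 W] {S : Set (V × W)} (hS : IsPolyhedral 𝕜 S) :
    IsPolyhedral 𝕜 (Prod.fst '' S) := by
  have hfg : (LinearMap.inr 𝕜 V W).range.FG := .of_finite
  convert (hS.add_submodule hfg).preimage (LinearMap.inl 𝕜 V W).toAffineMap using 1
  ext x
  constructor
  · rintro ⟨⟨x, y⟩, hxy, rfl⟩
    exact ⟨(x, y), hxy, (0, -y), ⟨-y, rfl⟩, by simp⟩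
  · rintro ⟨z, hz, _, ⟨y, rfl⟩, hzy⟩
    exact ⟨z, hz, by simpa using congrArg Prod.fst hzy⟩

lemma IsPolyhedral.image_fst_prodMk [Module.Finite 𝕜 W] {S : Set (V × W)}
    (hS : IsPolyhedral 𝕜 S) (c : V × W →ᵃ[𝕜] 𝕜) :
    IsPolyhedral 𝕜 ((fun z => (z.1, c z)) '' S) := by
  let forgetValue : (V × 𝕜) × W →ᵃ[𝕜] V × W :=
    (AffineMap.fst.comp AffineMap.fst).prod AffineMap.snd
  let value : (V × 𝕜) × W →ᵃ[𝕜] 𝕜 := AffineMap.snd.comp AffineMap.fst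
  have hgraph := (hS.preimage forgetValue).inter
    (isPolyhedral_setOf_eq (c.comp forgetValue) value)
  convert hgraph.image_fst using 1
  ext ⟨x, t⟩
  simp [forgetValue, value]

lemma IsPolyhedral.exists_isLeast_fiber {S : Set (V × 𝕜)} (hS : IsPolyhedral 𝕜 S) :
    ∃ (A : Finset (V →ᵃ[𝕜] 𝕜)) (hA : A.Nonempty), ∀ x,
      {t | (x, t) ∈ S}.Nonempty → BddBelow {t | (x, t) ∈ S} →
        IsLeast {t | (x, t) ∈ S} (A.sup' hA fun a => a x) := by
  classical
  obtain ⟨s, hs, rfl⟩ := hS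
  let bound (f : V × 𝕜 →ᵃ[𝕜] 𝕜) : V →ᵃ[𝕜] 𝕜 :=
    -(f.linear (0, 1))⁻¹ • f.comp (LinearMap.inl 𝕜 V 𝕜).toAffineMap
  have mem_iff_of_le {x : V} {t t₀ : 𝕜} (ht₀ : ∀ f ∈ s, f (x, t₀) ≤ 0) (ht : t ≤ t₀) :
      (∀ f ∈ s, f (x, t) ≤ 0) ↔ ∀ f ∈ s, f.linear (0, 1) < 0 → bound f x ≤ t := by
    have hiff := forall_add_smul_nonpos_iff_of_le (s := s) (x := (x, 0)) (v := ((0, 1) : V × 𝕜))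
      (by simpa using ht₀) ht
    simpa [bound, div_eq_inv_mul] using hiff
  let L := (hs.sep fun f => f.linear (0, 1) < 0).toFinset
  have mem_L {f} : f ∈ L ↔ f ∈ s ∧ f.linear (0, 1) < 0 := by simp [L]
  rcases L.eq_empty_or_nonempty with hL | hL
  · -- Without lower bounds no nonempty fiber is bounded below, so the choice of `{0}` is arbitrary.
    refine ⟨{0}, Finset.singleton_nonempty 0, fun x ⟨t₀, ht₀⟩ hbdd => ?_⟩
    have Iic_subset : Iic t₀ ⊆ {t | ∀ f ∈ s, f (x, t) ≤ 0} := fun t ht =>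
      (mem_iff_of_le ht₀ ht).2 fun f hf hneg => by simpa [hL] using mem_L.2 ⟨hf, hneg⟩
    exact absurd (hbdd.mono Iic_subset) (not_bddBelow_Iic t₀)
  · refine ⟨L.image bound, hL.image bound, fun x ⟨t₀, ht₀⟩ _ => ?_⟩
    have sup_le {t : 𝕜} (ht : ∀ f ∈ s, f (x, t) ≤ 0) :
        (L.image bound).sup' (hL.image bound) (fun a => a x) ≤ t := by
      simpa [mem_L] using (mem_iff_of_le ht le_rfl).1 ht
    refine ⟨(mem_iff_of_le ht₀ (sup_le ht₀)).2 fun f hf hneg => ?_, fun t ht => sup_le ht⟩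
    exact Finset.le_sup' (fun a : V →ᵃ[𝕜] 𝕜 => a x)
      (Finset.mem_image_of_mem bound (mem_L.2 ⟨hf, hneg⟩))

theorem IsPolyhedral.exists_isLeast_image_fiber [Module.Finite 𝕜 W] {S : Set (V × W)}
    (hS : IsPolyhedral 𝕜 S) (c : V × W →ᵃ[𝕜] 𝕜) :
    ∃ (A : Finset (V →ᵃ[𝕜] 𝕜)) (hA : A.Nonempty), ∀ x,
      {y | (x, y) ∈ S}.Nonempty → BddBelow ((fun y => c (x, y)) '' {y | (x, y) ∈ S}) →
        IsLeast ((fun y => c (x, y)) '' {y | (x, y) ∈ S}) (A.sup' hA fun a => a x) := by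
  obtain ⟨A, hA, hleast⟩ := (hS.image_fst_prodMk c).exists_isLeast_fiber
  have fiber_eq (x : V) : {t | (x, t) ∈ (fun z => (z.1, c z)) '' S} =
      (fun y => c (x, y)) '' {y | (x, y) ∈ S} := by
    ext t
    simp
  simp only [fiber_eq, image_nonempty] at hleast
  exact ⟨A, hA, hleast⟩

end Polyhedral

lemma isPolyhedral_stdSimplex (𝕜 ι : Type*) [Field 𝕜] [LinearOrder 𝕜] [IsStrictOrderedRing 𝕜]
    [Fintype ι] : IsPolyhedral 𝕜 (stdSimplex 𝕜 ι) := by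
  have hnonneg := isPolyhedral_iInter fun i : ι =>
    isPolyhedral_setOf_le (AffineMap.const 𝕜 (ι → 𝕜) 0) (LinearMap.proj i).toAffineMap
  have hsum := isPolyhedral_setOf_eq
    (dotProductBilin 𝕜 𝕜 (1 : ι → 𝕜)).toAffineMap (AffineMap.const 𝕜 (ι → 𝕜) 1)
  convert hnonneg.inter hsum using 1
  ext p
  simp [stdSimplex, dotProduct]

lemma isPolyhedral_setOf_isProbMatching_and_isFair (m η : ℕ) (M : Fin m → Fin η → ℝ) :
    IsPolyhedral ℝ {z : ℝ × (Fin η → ℝ) | IsProbMatching η z.2 ∧ IsFair m η M z.1 z.2} := by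
  let θ : ℝ × (Fin η → ℝ) →ᵃ[ℝ] ℝ := AffineMap.fst
  let p : ℝ × (Fin η → ℝ) →ᵃ[ℝ] Fin η → ℝ := AffineMap.snd
  have hprob := (isPolyhedral_stdSimplex ℝ (Fin η)).preimage p
  have hfair := isPolyhedral_iInter fun r =>
    isPolyhedral_setOf_le θ ((dotProductBilin ℝ ℝ (M r)).toAffineMap.comp p)
  convert hprob.inter hfair using 1
  ext z
  simp [IsProbMatching, IsFair, stdSimplex, dotProduct, θ, p]

lemma bddBelow_dotProduct_image_stdSimplex {ι : Type*} [Fintype ι] (w : ι → ℝ) :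
    BddBelow ((fun p => w ⬝ᵥ p) '' stdSimplex ℝ ι) :=
  (isCompact_stdSimplex ℝ ι).bddBelow_image (by fun_prop)

theorem F_piecewise_linear_general (m η : ℕ) (M : Fin m → Fin η → ℝ) (cost : Fin η → ℝ) :
    ∃ (n : ℕ) (a b : Fin (n + 1) → ℝ),
      ∀ θ : ℝ, (∃ p : Fin η → ℝ, IsProbMatching η p ∧ IsFair m η M θ p) →
        F m η M cost θ
          = Finset.univ.sup' Finset.univ_nonempty (fun i => a i + b i * θ) := by
  have hP := isPolyhedral_setOf_isProbMatching_and_isFair m η M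
  let c : ℝ × (Fin η → ℝ) →ᵃ[ℝ] ℝ := (dotProductBilin ℝ ℝ cost).toAffineMap.comp AffineMap.snd
  obtain ⟨A, hA, hleast⟩ := hP.exists_isLeast_image_fiber c
  obtain ⟨n, e, he⟩ := exists_fin_sup'_eq (β := ℝ) hA
  refine ⟨n, fun i => e i 0, fun i => (e i).linear 1, fun θ hθ => ?_⟩
  have hbdd : BddBelow ((fun p => c (θ, p)) '' {p | IsProbMatching η p ∧ IsFair m η M θ p}) :=
    (bddBelow_dotProduct_image_stdSimplex cost).mono (image_mono fun _ hp => hp.1)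
  calc F m η M cost θ
      = sInf ((fun p => c (θ, p)) '' {p | IsProbMatching η p ∧ IsFair m η M θ p}) := by
        simp [F, c, image, dotProduct, and_assoc]
    _ = A.sup' hA fun a => a θ := (hleast θ hθ hbdd).csInf_eq
    _ = Finset.univ.sup' Finset.univ_nonempty fun i => e i 0 + (e i).linear 1 * θ := by
        rw [he]
        congr 1 with i
        simpa [mul_comm] using affineMap_add_smul (e i) 0 1 θ

/-- The optimal-cost function `F` is piecewise linear: there is a
finite (nonempty) family of affine functions `θ ↦ a i + b i * θ` whose pointwise
maximum equals `F θ` whenever a `θ`-fair probabilistic matching exists. -/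
theorem F_piecewise_linear
    (m η : ℕ) (hm : 1 ≤ m) (hη : 1 ≤ η)
    (M : Fin m → Fin η → ℝ) (hM : ∀ r ℓ, M r ℓ = 0 ∨ M r ℓ = 1)
    (cost : Fin η → ℝ) :
    ∃ (n : ℕ) (a b : Fin (n + 1) → ℝ),
      ∀ θ : ℝ, (∃ p : Fin η → ℝ, IsProbMatching η p ∧ IsFair m η M θ p) →
        F m η M cost θ
          = Finset.univ.sup' Finset.univ_nonempty (fun i => a i + b i * θ) :=
  F_piecewise_linear_general m η M cost
end

section
/- In the two-rider, one-driver instance with deterministic matchings of costs 1 (serving rider 1 only) and C (serving rider 2 only), for every C ≥ 1 and θ ∈ [0, 1/2] the minimum of p₁·1 + p₂·C over p₁, p₂ ≥ 0 with p₁ + p₂ = 1, p₁ ≥ θ and p₂ ≥ θ equals 1 + θ·(C − 1). Consequently, for every K ≥ 1 and every θ ∈ (0, 1/2], taking C = 1 + (K − 1)/θ ≥ 1 makes the ratio of this θ-fair optimum to the unconstrained optimum (which equals 1) exactly K; hence the price of fairness can be made equal to any prescribed K ≥ 1. -/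
/-!
Since `p₁ + p₂ = 1`, the expected cost of serving the riders at costs `a ≤ b` is
`a + p₂ * (b - a)`, which increases with the probability of the expensive matching. The optimum
therefore gives that matching the least probability `θ` that fairness allows. Without fairness the
optimum is `a`, so the price of fairness is affine in `b` with slope `θ / a`, and solving for `b`
attains any prescribed `K ≥ 1`.
-/

section FairCosts

variable {R : Type*} [CommRing R] {a b p₁ p₂ θ : R}

theorem mul_add_mul_eq_add_mul_sub (hsum : p₁ + p₂ = 1) :
    p₁ * a + p₂ * b = a + p₂ * (b - a) := by
  linear_combination a * hsum

variable [LinearOrder R]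

/-- The expected costs of the `θ`-fair probabilistic matchings `(p₁, p₂)`, when the deterministic
matching serving only rider 1 costs `a` and the one serving only rider 2 costs `b`. Taking
`θ = 0` imposes no fairness constraint, so the unconstrained costs are `fairCosts a b 0`. -/
def fairCosts (a b θ : R) : Set R :=
  {v | ∃ p₁ p₂ : R, 0 ≤ p₁ ∧ 0 ≤ p₂ ∧ p₁ + p₂ = 1 ∧ θ ≤ p₁ ∧ θ ≤ p₂ ∧ v = p₁ * a + p₂ * b}

theorem add_mul_sub_mem_fairCosts (hθ₀ : 0 ≤ θ) (hθ : θ ≤ 1 - θ) :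
    a + θ * (b - a) ∈ fairCosts a b θ :=
  have hsum : 1 - θ + θ = 1 := sub_add_cancel 1 θ
  ⟨1 - θ, θ, hθ₀.trans hθ, hθ₀, hsum, hθ, le_rfl, (mul_add_mul_eq_add_mul_sub hsum).symm⟩

variable [IsStrictOrderedRing R]

theorem add_mul_sub_mem_lowerBounds_fairCosts (hab : a ≤ b) :
    a + θ * (b - a) ∈ lowerBounds (fairCosts a b θ) := by
  rintro _ ⟨p₁, p₂, -, -, hsum, -, hθp₂, rfl⟩
  calc a + θ * (b - a) ≤ a + p₂ * (b - a) := by gcongr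
    _ = p₁ * a + p₂ * b := (mul_add_mul_eq_add_mul_sub hsum).symm

theorem isLeast_fairCosts (hab : a ≤ b) (hθ₀ : 0 ≤ θ) (hθ : θ ≤ 1 - θ) :
    IsLeast (fairCosts a b θ) (a + θ * (b - a)) :=
  ⟨add_mul_sub_mem_fairCosts hθ₀ hθ, add_mul_sub_mem_lowerBounds_fairCosts hab⟩

theorem isLeast_fairCosts_zero (hab : a ≤ b) : IsLeast (fairCosts a b 0) a := by
  simpa using isLeast_fairCosts hab le_rfl (by simp : (0 : R) ≤ 1 - 0)

end FairCosts

section PriceOfFairness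

variable {𝕜 : Type*} [Field 𝕜]

theorem add_mul_mul_one_add_div_sub {θ : 𝕜} (hθ : θ ≠ 0) (a K : 𝕜) :
    a + θ * (a * (1 + (K - 1) / θ) - a) = K * a := by
  field_simp
  ring

variable [LinearOrder 𝕜] [IsStrictOrderedRing 𝕜]

theorem le_mul_one_add_sub_one_div {a K θ : 𝕜} (ha : 0 ≤ a) (hK : 1 ≤ K) (hθ : 0 ≤ θ) :
    a ≤ a * (1 + (K - 1) / θ) :=
  le_mul_of_one_le_right ha (le_add_of_nonneg_right (div_nonneg (sub_nonneg.2 hK) hθ))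

theorem pof_arbitrarily_large_general :
    (∀ a b θ : 𝕜, a ≤ b → 0 ≤ θ → θ ≤ 1 / 2 →
      IsLeast (fairCosts a b θ) (a + θ * (b - a))) ∧
    (∀ a K θ : 𝕜, 0 ≤ a → 1 ≤ K → 0 < θ → θ ≤ 1 / 2 →
      a ≤ a * (1 + (K - 1) / θ) ∧
      IsLeast (fairCosts a (a * (1 + (K - 1) / θ)) 0) a ∧
      IsLeast (fairCosts a (a * (1 + (K - 1) / θ)) θ) (K * a)) := by
  have hfair (a b θ : 𝕜) (hab : a ≤ b) (hθ₀ : 0 ≤ θ) (hθ : θ ≤ 1 / 2) :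
      IsLeast (fairCosts a b θ) (a + θ * (b - a)) :=
    isLeast_fairCosts hab hθ₀ (by linarith)
  refine ⟨hfair, fun a K θ ha hK hθ₀ hθ => ?_⟩
  have hab : a ≤ a * (1 + (K - 1) / θ) := le_mul_one_add_sub_one_div ha hK hθ₀.le
  refine ⟨hab, isLeast_fairCosts_zero hab, ?_⟩
  rw [← add_mul_mul_one_add_div_sub hθ₀.ne' a K]
  exact hfair a _ θ hab hθ₀.le hθ

end PriceOfFairness

/-- In the two-rider one-driver instance (costs `1` and `C`),
the `θ`-fair minimum expected cost is `1 + θ * (C - 1)` for `C ≥ 1` and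
`θ ∈ [0, 1/2]`; consequently, for any `K ≥ 1` and `θ ∈ (0, 1/2]`, choosing
`C = 1 + (K - 1)/θ ≥ 1` makes the price of fairness (the ratio of the θ-fair
optimum to the unconstrained optimum, which equals `1`) exactly `K`. -/
theorem pof_arbitrarily_large :
    (∀ C θ : ℝ, 1 ≤ C → 0 ≤ θ → θ ≤ 1 / 2 →
      IsLeast {v : ℝ | ∃ p₁ p₂ : ℝ, 0 ≤ p₁ ∧ 0 ≤ p₂ ∧ p₁ + p₂ = 1 ∧
          θ ≤ p₁ ∧ θ ≤ p₂ ∧ v = p₁ * 1 + p₂ * C}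
        (1 + θ * (C - 1))) ∧
    (∀ K θ : ℝ, 1 ≤ K → 0 < θ → θ ≤ 1 / 2 →
      (1 : ℝ) ≤ 1 + (K - 1) / θ ∧
      (1 + θ * ((1 + (K - 1) / θ) - 1)) / 1 = K) := by
  obtain ⟨hfair, hprice⟩ := pof_arbitrarily_large_general (𝕜 := ℝ)
  refine ⟨hfair 1, fun K θ hK hθ₀ hθ => ?_⟩
  obtain ⟨hC, -, hopt⟩ := one_mul (1 + (K - 1) / θ) ▸ hprice 1 K θ zero_le_one hK hθ₀ hθ
  exact ⟨hC, by rw [div_one, (hfair 1 _ θ hC hθ₀.le hθ).unique hopt, mul_one]⟩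
end

section
/- Single-driver price-of-fairness bound (case where the min-cost outcome serves a rider): let n ≥ 1, let c : Fin n → ℝ give the cost of the driver serving rider i (option i matches exactly rider i), let c* = min_i c i with c* ≥ 0, and suppose c i ≤ R·c* for all i with R ≥ 1. Then for every θ ∈ [0, 1/n] there exists p : Fin n → ℝ with p i ≥ θ for all i, p i ≥ 0, ∑_i p i = 1, and ∑_i p i · c i ≤ (θ·(n−1)·(R−1) + 1)·c*. -/
/-!
Every rider receives the mandatory probability `θ`, and the remaining mass `1 - n θ ≥ 0` goes to one
rider `k`, here a cheapest one. Relative to always serving `k`, the expected cost changes by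
`θ ∑ i, (c i - c k)`. The term `i = k` of that sum vanishes and each of the other `n - 1` terms is
at most `(R - 1) c k`.
-/

section FairAssignment

variable {ι 𝕜 : Type*} [Fintype ι] [DecidableEq ι] [Ring 𝕜]

/-- The assignment that gives every rider the fairness level `θ` and all of the remaining mass to
the rider `k`. The parameter `θ` is unrestricted; if `Fintype.card ι * θ > 1`, the entry at `k` is
below `θ`. -/
def fairAssignment (θ : 𝕜) (k : ι) : ι → 𝕜 :=
  fun i => θ + (Pi.single k (1 - Fintype.card ι * θ) : ι → 𝕜) i

theorem sum_fairAssignment_mul (θ : 𝕜) (k : ι) (c : ι → 𝕜) :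
    ∑ i, fairAssignment θ k i * c i = c k + θ * ∑ i, (c i - c k) := by
  have hsingle : ∑ i, (Pi.single k (1 - Fintype.card ι * θ) : ι → 𝕜) i * c i =
      (1 - Fintype.card ι * θ) * c k :=
    single_dotProduct c _ k
  have hexcess : θ * ∑ i, (c i - c k) = θ * ∑ i, c i - Fintype.card ι * θ * c k := by
    rw [Finset.sum_sub_distrib, Finset.sum_const, Finset.card_univ, nsmul_eq_mul, mul_sub,
      ← mul_assoc, (Nat.cast_commute _ θ).eq]
  simp only [fairAssignment, add_mul, Finset.sum_add_distrib, ← Finset.mul_sum]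
  rw [hsingle, hexcess]
  noncomm_ring

theorem sum_fairAssignment (θ : 𝕜) (k : ι) : ∑ i, fairAssignment θ k i = 1 := by
  simpa using sum_fairAssignment_mul θ k 1

theorem le_fairAssignment [PartialOrder 𝕜] [IsOrderedAddMonoid 𝕜] {θ : 𝕜}
    (hθ : Fintype.card ι * θ ≤ 1) (k i : ι) : θ ≤ fairAssignment θ k i := by
  have hrest : (0 : ι → 𝕜) ≤ Pi.single k (1 - Fintype.card ι * θ) :=
    Pi.single_nonneg.2 (sub_nonneg.2 hθ)
  exact le_add_of_nonneg_right (hrest i)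

end FairAssignment

theorem sum_le_card_sub_one_nsmul {ι M : Type*} [Fintype ι] [AddCommMonoid M] [PartialOrder M]
    [IsOrderedAddMonoid M] {f : ι → M} {k : ι} {b : M} (hk : f k ≤ 0) (hf : ∀ i ≠ k, f i ≤ b) :
    ∑ i, f i ≤ (Fintype.card ι - 1) • b := by
  classical
  calc ∑ i, f i = f k + ∑ i ∈ Finset.univ.erase k, f i :=
        (Finset.add_sum_erase _ f (Finset.mem_univ k)).symm
    _ ≤ ∑ i ∈ Finset.univ.erase k, f i := add_le_of_nonpos_left hk
    _ ≤ (Finset.univ.erase k).card • b :=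
        Finset.sum_le_card_nsmul _ f b fun i hi => hf i (Finset.ne_of_mem_erase hi)
    _ = (Fintype.card ι - 1) • b := by
        rw [Finset.card_erase_of_mem (Finset.mem_univ k), Finset.card_univ]

theorem single_driver_pof_bound_served_general {ι 𝕜 : Type*} [Fintype ι] [Field 𝕜] [LinearOrder 𝕜]
    [IsStrictOrderedRing 𝕜] {c : ι → 𝕜} {k : ι} {R : 𝕜} (hle : ∀ i, c i ≤ R * c k)
    {θ : 𝕜} (hθ0 : 0 ≤ θ) (hθ1 : θ ≤ 1 / Fintype.card ι) :
    ∃ p : ι → 𝕜,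
      (∀ i, θ ≤ p i) ∧ (∀ i, 0 ≤ p i) ∧ (∑ i, p i = 1) ∧
      ∑ i, p i * c i ≤ (θ * (Fintype.card ι - 1) * (R - 1) + 1) * c k := by
  classical
  have hcard : 0 < Fintype.card ι := Fintype.card_pos_iff.2 ⟨k⟩
  have hmass : Fintype.card ι * θ ≤ 1 := (le_div_iff₀' (Nat.cast_pos.2 hcard)).1 hθ1
  have hfair : ∀ i, θ ≤ fairAssignment θ k i := le_fairAssignment hmass k
  have hexcess : ∑ i, (c i - c k) ≤ (Fintype.card ι - 1) * (R * c k - c k) := by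
    rw [← Nat.cast_pred hcard, ← nsmul_eq_mul]
    exact sum_le_card_sub_one_nsmul (sub_self (c k)).le fun i _ => sub_le_sub_right (hle i) _
  refine ⟨fairAssignment θ k, hfair, fun i => hθ0.trans (hfair i), sum_fairAssignment θ k, ?_⟩
  calc ∑ i, fairAssignment θ k i * c i = c k + θ * ∑ i, (c i - c k) :=
        sum_fairAssignment_mul θ k c
    _ ≤ c k + θ * ((Fintype.card ι - 1) * (R * c k - c k)) := by gcongr
    _ = (θ * (Fintype.card ι - 1) * (R - 1) + 1) * c k := by ring

/-- Single-driver price-of-fairness bound, case `|S*_d| > 0`: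
there is a `θ`-fair probabilistic assignment with expected cost at most
`(θ (n-1) (R-1) + 1) c*`. -/
theorem single_driver_pof_bound_served
    (n : ℕ) (hn : 1 ≤ n) (c : Fin n → ℝ) (cstar R : ℝ)
    (hcstar : cstar = Finset.univ.inf' ⟨⟨0, hn⟩, Finset.mem_univ _⟩ c)
    (hcstar0 : 0 ≤ cstar) (hR : 1 ≤ R)
    (hle : ∀ i, c i ≤ R * cstar)
    (θ : ℝ) (hθ0 : 0 ≤ θ) (hθ1 : θ ≤ 1 / (n : ℝ)) :
    ∃ p : Fin n → ℝ,
      (∀ i, θ ≤ p i) ∧ (∀ i, 0 ≤ p i) ∧ (∑ i, p i = 1) ∧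
      ∑ i, p i * c i ≤ (θ * ((n : ℝ) - 1) * (R - 1) + 1) * cstar := by
  obtain ⟨k, -, hk⟩ := Finset.exists_mem_eq_inf' ⟨⟨0, hn⟩, Finset.mem_univ _⟩ c
  obtain rfl : cstar = c k := hcstar.trans hk
  simpa only [Fintype.card_fin] using
    single_driver_pof_bound_served_general hle hθ0 (by rwa [Fintype.card_fin])
end

section
/- Single-driver price-of-fairness bound (case where the min-cost outcome serves no rider): let n ≥ 1, let c₀ ≥ 0 be the cost of the driver driving alone (matching no rider), and let c : Fin n → ℝ give the cost of serving rider i, with c i ≤ R·c₀ for all i and R ≥ 1. Then for every θ ∈ [0, 1/n] there exists a probability vector p over the n+1 options (option 0 = drive alone with cost c₀, option i = serve rider i with cost c i) such that each rider i is selected with probability at least θ and the expected cost is at most (θ·n·(R−1) + 1)·c₀. -/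
theorem single_driver_pof_bound_unserved_general
    {ι K : Type*} [Fintype ι] [CommRing K] [PartialOrder K] [IsOrderedRing K]
    {c₀ R : K} {c θ : ι → K} (hle : ∀ i, c i ≤ R * c₀)
    (hθ0 : ∀ i, 0 ≤ θ i) (hθ1 : ∑ i, θ i ≤ 1) :
    ∃ (p₀ : K) (p : ι → K),
      0 ≤ p₀ ∧ (∀ i, 0 ≤ p i) ∧ (p₀ + ∑ i, p i = 1) ∧
      (∀ i, θ i ≤ p i) ∧
      p₀ * c₀ + ∑ i, p i * c i ≤ ((∑ i, θ i) * (R - 1) + 1) * c₀ := by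
  refine ⟨1 - ∑ i, θ i, θ, sub_nonneg.mpr hθ1, hθ0, sub_add_cancel _ _, fun _ => le_rfl, ?_⟩
  calc
    (1 - ∑ i, θ i) * c₀ + ∑ i, θ i * c i
      ≤ (1 - ∑ i, θ i) * c₀ + ∑ i, θ i * (R * c₀) := by
        gcongr with i
        exacts [hθ0 i, hle i]
    _ = ((∑ i, θ i) * (R - 1) + 1) * c₀ := by
        rw [← Finset.sum_mul]
        ring

/-- Single-driver price-of-fairness bound, case `|S*_d| = 0`
(the min-cost outcome serves no rider): there is a `θ`-fair probabilistic
assignment over the `n + 1` options (option 0 = drive alone at cost `c₀`,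
option `i` = serve rider `i` at cost `c i`) with expected cost at most
`(θ n (R-1) + 1) c₀`. -/
theorem single_driver_pof_bound_unserved
    (n : ℕ) (hn : 1 ≤ n) (c₀ : ℝ) (hc₀ : 0 ≤ c₀)
    (c : Fin n → ℝ) (R : ℝ) (hR : 1 ≤ R)
    (hle : ∀ i, c i ≤ R * c₀)
    (θ : ℝ) (hθ0 : 0 ≤ θ) (hθ1 : θ ≤ 1 / (n : ℝ)) :
    ∃ (p₀ : ℝ) (p : Fin n → ℝ),
      0 ≤ p₀ ∧ (∀ i, 0 ≤ p i) ∧ (p₀ + ∑ i, p i = 1) ∧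
      (∀ i, θ ≤ p i) ∧
      p₀ * c₀ + ∑ i, p i * c i ≤ (θ * (n : ℝ) * (R - 1) + 1) * c₀ := by
  have hsum : ∑ _i : Fin n, θ = θ * n := by simp [mul_comm]
  simpa only [hsum] using single_driver_pof_bound_unserved_general hle (fun _ => hθ0)
    (hsum.trans_le (mul_le_of_le_div₀ zero_le_one n.cast_nonneg hθ1))
end

section
/- Tightness of the single-driver price-of-fairness bound: let n ≥ 1, c* ≥ 0, R ≥ 1, fix a distinguished index i* ∈ Fin n, and define c : Fin n → ℝ by c i* = c* and c i = R·c* for i ≠ i*. Then for every θ ∈ [0, 1/n], the minimum of ∑_i p i · c i over all p : Fin n → ℝ with p i ≥ 0, ∑_i p i = 1 and p i ≥ θ for all i equals (θ·(n−1)·(R−1) + 1)·c*. -/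
/-!
For a probability vector `p`, the expected cost exceeds `a + θ * ∑ i, (c i - a)` by exactly
`∑ i, (p i - θ) * (c i - a)`. When `a` is the smallest cost and `p` is `θ`-fair, every term of this
excess is nonnegative, and all of them vanish once `p i = θ` away from a cheapest index, that is,
when the mass left over by `θ`-fairness is put on that index.
-/

section Costs

variable {ι K : Type*} [Fintype ι] [CommRing K]

theorem sum_mul_eq_add_sum_sub_mul_sub {p : ι → K} (hp : ∑ i, p i = 1) (c : ι → K) (θ a : K) :
    ∑ i, p i * c i = θ * ∑ i, (c i - a) + a + ∑ i, (p i - θ) * (c i - a) := by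
  calc ∑ i, p i * c i = ∑ i, (θ * (c i - a) + p i * a + (p i - θ) * (c i - a)) :=
        Finset.sum_congr rfl fun i _ => by ring
    _ = θ * ∑ i, (c i - a) + a + ∑ i, (p i - θ) * (c i - a) := by
        rw [Finset.sum_add_distrib, Finset.sum_add_distrib, ← Finset.mul_sum, ← Finset.sum_mul,
          hp, one_mul]

theorem sum_sub_apply_eq_of_forall_ne {c : ι → K} {i₀ : ι} {b : K} (hc : ∀ i, i ≠ i₀ → c i = b) :
    ∑ i, (c i - c i₀) = ((Fintype.card ι : K) - 1) * (b - c i₀) := by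
  have hsum : ∑ i, (c i - b) = c i₀ - b :=
    Fintype.sum_eq_single i₀ fun i hi => sub_eq_zero.mpr (hc i hi)
  calc ∑ i, (c i - c i₀) = ∑ i, ((c i - b) + (b - c i₀)) := by simp only [sub_add_sub_cancel]
    _ = ((Fintype.card ι : K) - 1) * (b - c i₀) := by
        rw [Finset.sum_add_distrib, hsum, Finset.sum_const, Finset.card_univ, nsmul_eq_mul]
        ring

end Costs

section FairVertex

variable {ι K : Type*} [Fintype ι] [DecidableEq ι] [CommRing K]

/-- The vertex at `i₀` of the simplex of `θ`-fair probabilistic assignments: every index gets mass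
`θ`, and `i₀` also gets the leftover mass. The leftover is negative, and the vector no longer
`θ`-fair, when `θ * Fintype.card ι > 1`. -/
def fairVertex (θ : K) (i₀ : ι) : ι → K :=
  fun i => θ + Pi.single (M := fun _ => K) i₀ (1 - θ * Fintype.card ι) i

theorem fairVertex_of_ne (θ : K) {i₀ i : ι} (hi : i ≠ i₀) : fairVertex θ i₀ i = θ := by
  rw [fairVertex, Pi.single_eq_of_ne hi, add_zero]

theorem sum_fairVertex (θ : K) (i₀ : ι) : ∑ i, fairVertex θ i₀ i = 1 := by
  simp only [fairVertex, Finset.sum_add_distrib, Finset.sum_const, Finset.card_univ, nsmul_eq_mul,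
    Finset.sum_pi_single', Finset.mem_univ, if_true]
  ring

theorem sum_fairVertex_mul (θ : K) (i₀ : ι) (c : ι → K) :
    ∑ i, fairVertex θ i₀ i * c i = θ * ∑ i, (c i - c i₀) + c i₀ := by
  have hslack : ∀ i, (fairVertex θ i₀ i - θ) * (c i - c i₀) = 0 := by
    intro i
    obtain rfl | hi := eq_or_ne i i₀
    · rw [sub_self (c i), mul_zero]
    · rw [fairVertex_of_ne θ hi, sub_self, zero_mul]
  rw [sum_mul_eq_add_sum_sub_mul_sub (sum_fairVertex θ i₀) c θ (c i₀),
    Fintype.sum_eq_zero _ hslack, add_zero]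

theorem le_fairVertex [PartialOrder K] [IsOrderedAddMonoid K] {θ : K}
    (hθ : θ * Fintype.card ι ≤ 1) (i₀ i : ι) : θ ≤ fairVertex θ i₀ i :=
  le_add_of_nonneg_right <|
    (Pi.single_nonneg (α := fun _ => K)).mpr (sub_nonneg.mpr hθ) i

end FairVertex

section Minimum

variable {ι K : Type*} [Fintype ι] [CommRing K] [PartialOrder K] [IsOrderedRing K]

theorem mul_sum_sub_add_le_sum_mul {p c : ι → K} {θ a : K} (hp : ∑ i, p i = 1)
    (hfair : ∀ i, θ ≤ p i) (ha : ∀ i, a ≤ c i) :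
    θ * ∑ i, (c i - a) + a ≤ ∑ i, p i * c i := by
  rw [sum_mul_eq_add_sum_sub_mul_sub hp c θ a]
  exact le_add_of_nonneg_right <| Finset.sum_nonneg fun i _ =>
    mul_nonneg (sub_nonneg.mpr (hfair i)) (sub_nonneg.mpr (ha i))

theorem single_driver_pof_bound_tight_general {c : ι → K} {i₀ : ι} (hmin : ∀ i, c i₀ ≤ c i)
    {θ : K} (hθ₀ : 0 ≤ θ) (hθ₁ : θ * Fintype.card ι ≤ 1) :
    IsLeast {v : K | ∃ p : ι → K,
        (∀ i, 0 ≤ p i) ∧ (∑ i, p i = 1) ∧ (∀ i, θ ≤ p i) ∧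
        v = ∑ i, p i * c i}
      (θ * ∑ i, (c i - c i₀) + c i₀) := by
  classical
  have hfair := le_fairVertex hθ₁ i₀
  constructor
  · exact ⟨fairVertex θ i₀, fun i => hθ₀.trans (hfair i), sum_fairVertex θ i₀, hfair,
      (sum_fairVertex_mul θ i₀ c).symm⟩
  · rintro _ ⟨p, -, hp, hpfair, rfl⟩
    exact mul_sum_sub_add_le_sum_mul hp hpfair hmin

end Minimum

/-- Tightness of the single-driver price-of-fairness bound:
with one cheap option of cost `c*` and all other options of cost `R·c*`,
the `θ`-fair minimum expected cost equals `(θ (n-1) (R-1) + 1) c*` for every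
`θ ∈ [0, 1/n]`. -/
theorem single_driver_pof_bound_tight
    (n : ℕ) (hn : 1 ≤ n) (cstar R : ℝ) (hcstar0 : 0 ≤ cstar) (hR : 1 ≤ R)
    (istar : Fin n) (c : Fin n → ℝ)
    (hcistar : c istar = cstar)
    (hcother : ∀ i, i ≠ istar → c i = R * cstar)
    (θ : ℝ) (hθ0 : 0 ≤ θ) (hθ1 : θ ≤ 1 / (n : ℝ)) :
    IsLeast {v : ℝ | ∃ p : Fin n → ℝ,
        (∀ i, 0 ≤ p i) ∧ (∑ i, p i = 1) ∧ (∀ i, θ ≤ p i) ∧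
        v = ∑ i, p i * c i}
      ((θ * ((n : ℝ) - 1) * (R - 1) + 1) * cstar) := by
  subst hcistar
  have hmin : ∀ i, c istar ≤ c i := by
    intro i
    obtain rfl | hi := eq_or_ne i istar
    · exact le_rfl
    · exact (le_mul_of_one_le_left hcstar0 hR).trans_eq (hcother i hi).symm
  have hmass : θ * Fintype.card (Fin n) ≤ 1 := by
    rw [Fintype.card_fin]
    exact mul_le_of_le_div₀ zero_le_one n.cast_nonneg hθ1
  have hvalue : (θ * ((n : ℝ) - 1) * (R - 1) + 1) * c istar
      = θ * ∑ i, (c i - c istar) + c istar := by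
    rw [sum_sub_apply_eq_of_forall_ne hcother, Fintype.card_fin]
    ring
  exact hvalue ▸ single_driver_pof_bound_tight_general hmin hθ0 hmass
end

section
/- Correctness of the bisection step for computing a convex piecewise-linear Pareto frontier: let f : ℝ → ℝ be convex, let a < m < b be real numbers, and let g₁, g₂ : ℝ → ℝ be affine functions such that g₁(x) ≤ f(x) and g₂(x) ≤ f(x) for all x ∈ [a,b], g₁(a) = f(a), g₂(b) = f(b), and g₁(m) = g₂(m) = f(m). Then f(x) = max(g₁(x), g₂(x)) for every x ∈ [a,b]. -/
/-!
The points where a concave function dominates a convex one form a convex set. Affine functions being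
concave, `f ≤ g₁` holds on `[a, m]` because it holds at `a` and `m`, and `f ≤ g₂` on `[m, b]`
because it holds at `m` and `b`. So `f ≤ max g₁ g₂` on `[a, b]`, and minorants give the converse.
-/

theorem convex_setOf_le_of_convexOn_of_concaveOn {𝕜 E β : Type*} [Semiring 𝕜] [PartialOrder 𝕜]
    [AddCommMonoid E] [SMul 𝕜 E] [AddCommMonoid β] [PartialOrder β] [IsOrderedAddMonoid β]
    [SMul 𝕜 β] [PosSMulMono 𝕜 β] {s : Set E} {f g : E → β}
    (hf : ConvexOn 𝕜 s f) (hg : ConcaveOn 𝕜 s g) : Convex 𝕜 {x ∈ s | f x ≤ g x} := by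
  rintro x ⟨hxs, hx⟩ y ⟨hys, hy⟩ c d hc hd hcd
  refine ⟨hf.1 hxs hys hc hd hcd, ?_⟩
  calc f (c • x + d • y) ≤ c • f x + d • f y := hf.2 hxs hys hc hd hcd
    _ ≤ c • g x + d • g y := by gcongr
    _ ≤ g (c • x + d • y) := hg.2 hxs hys hc hd hcd

theorem concaveOn_of_exists_eq_const_add_mul {𝕜 : Type*} [CommSemiring 𝕜] [PartialOrder 𝕜]
    [IsOrderedAddMonoid 𝕜] {s : Set 𝕜} {g : 𝕜 → 𝕜} (hs : Convex 𝕜 s)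
    (hg : ∃ p q : 𝕜, ∀ x, g x = p + q * x) : ConcaveOn 𝕜 s g := by
  obtain ⟨p, q, hpq⟩ := hg
  obtain rfl : g = fun x => p + q * x := funext hpq
  exact (concaveOn_const p hs).add ((LinearMap.mulLeft 𝕜 q).concaveOn hs)

theorem bisection_step_correct_general {𝕜 β : Type*} [Field 𝕜] [LinearOrder 𝕜]
    [IsStrictOrderedRing 𝕜] [AddCommMonoid β] [Lattice β] [IsOrderedAddMonoid β] [SMul 𝕜 β]
    [PosSMulMono 𝕜 β] {f g₁ g₂ : 𝕜 → β} {a m b : 𝕜}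
    (hf : ConvexOn 𝕜 (Set.Icc a b) f)
    (hg₁ : ConcaveOn 𝕜 (Set.Icc a b) g₁) (hg₂ : ConcaveOn 𝕜 (Set.Icc a b) g₂)
    (hm : m ∈ Set.Icc a b)
    (hg₁le : ∀ x ∈ Set.Icc a b, g₁ x ≤ f x) (hg₂le : ∀ x ∈ Set.Icc a b, g₂ x ≤ f x)
    (hg₁a : g₁ a = f a) (hg₂b : g₂ b = f b) (hg₁m : g₁ m = f m) (hg₂m : g₂ m = f m) :
    ∀ x ∈ Set.Icc a b, f x = g₁ x ⊔ g₂ x := by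
  intro x hx
  have hab : a ≤ b := hm.1.trans hm.2
  have hconn₁ := (convex_setOf_le_of_convexOn_of_concaveOn hf hg₁).ordConnected
  have hconn₂ := (convex_setOf_le_of_convexOn_of_concaveOn hf hg₂).ordConnected
  have le_g₁ (hxm : x ≤ m) : f x ≤ g₁ x :=
    (hconn₁.out ⟨Set.left_mem_Icc.2 hab, hg₁a.ge⟩ ⟨hm, hg₁m.ge⟩ ⟨hx.1, hxm⟩).2
  have le_g₂ (hmx : m ≤ x) : f x ≤ g₂ x :=
    (hconn₂.out ⟨hm, hg₂m.ge⟩ ⟨Set.right_mem_Icc.2 hab, hg₂b.ge⟩ ⟨hmx, hx.2⟩).2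
  refine le_antisymm ?_ (sup_le (hg₁le x hx) (hg₂le x hx))
  rcases le_total x m with hxm | hmx
  · exact le_sup_of_le_left (le_g₁ hxm)
  · exact le_sup_of_le_right (le_g₂ hmx)

/-- Correctness of the bisection step for a convex function: if
two affine minorants of a convex `f` on `[a, b]` touch `f` at `a` (resp. `b`)
and both touch `f` at an interior point `m`, then `f` equals their pointwise
maximum on all of `[a, b]`. -/
theorem bisection_step_correct
    (f g₁ g₂ : ℝ → ℝ) (hf : ConvexOn ℝ Set.univ f)
    (a m b : ℝ) (ham : a < m) (hmb : m < b)
    (hg₁affine : ∃ p q : ℝ, ∀ x, g₁ x = p + q * x)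
    (hg₂affine : ∃ p q : ℝ, ∀ x, g₂ x = p + q * x)
    (hg₁le : ∀ x ∈ Set.Icc a b, g₁ x ≤ f x)
    (hg₂le : ∀ x ∈ Set.Icc a b, g₂ x ≤ f x)
    (hg₁a : g₁ a = f a) (hg₂b : g₂ b = f b)
    (hg₁m : g₁ m = f m) (hg₂m : g₂ m = f m) :
    ∀ x ∈ Set.Icc a b, f x = max (g₁ x) (g₂ x) :=
  bisection_step_correct_general (hf.subset (Set.subset_univ _) (convex_Icc a b))
    (concaveOn_of_exists_eq_const_add_mul (convex_Icc a b) hg₁affine)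
    (concaveOn_of_exists_eq_const_add_mul (convex_Icc a b) hg₂affine)
    ⟨ham.le, hmb.le⟩ hg₁le hg₂le hg₁a hg₂b hg₁m hg₂m
end

section
/- Cost minimization is equivalent to welfare maximization with altruistic drivers: let Π be a finite nonempty set of schedules, R a finite set of riders, D a finite set of drivers, and σ : Π → R → Option D assign to each schedule the driver (if any) serving each rider. Given constants ν_r, λ_r (for riders), ν_d, ρ_d (for drivers) and cost functions Cr : Π → R → ℝ, Cd : Π → D → ℝ, define rider utility U_r(π) = ν_r − Cr π r if σ π r ≠ none and U_r(π) = ν_r − λ_r otherwise; driver utility Ũ_d(π) = ν_d − Cd π d + ρ_d · ∑_{r : σ π r = some d} U_r(π); total welfare W(π) = ∑_r U_r(π) + ∑_d Ũ_d(π); and modified total cost K(π) = ∑_d Cd π d + ∑_d ∑_{r : σ π r = some d} (1 + ρ_d)·Cr π r + ∑_{r : σ π r = none} λ_r − ∑_d ρ_d · ∑_{r : σ π r = some d} ν_r. Then W(π) = (∑_r ν_r + ∑_d ν_d) − K(π) for every π ∈ Π, and consequently a schedule π* maximizes W over Π if and only if π* minimizes K over Π. -/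
/-!
A rider's utility is her trip value minus the cost she incurs: the alternative `lamr` if she is
unmatched, the travel cost otherwise. Splitting the riders by serving driver, a driver `d` counts
the utility of each rider she serves `1 + ρd d` times in the welfare, once for the rider and `ρd d`
times by altruism. The trip values counted once add up to the same constant for every schedule;
everything else is the modified cost, with the opposite sign.
-/

theorem sum_eq_sum_none_add_sum_some {ι α M : Type*} [Fintype α] [DecidableEq α] [AddCommMonoid M]
    (t : Finset ι) (s : ι → Option α) (f : ι → M) :
    ∑ i ∈ t, f i = ∑ i ∈ t with s i = none, f i + ∑ a, ∑ i ∈ t with s i = some a, f i := by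
  rw [← Finset.sum_fiberwise t s f, Fintype.sum_option]

section RiderUtility

variable {R D M : Type*} [AddCommGroup M]

/-- The utility `U_r(π)` of a rider under the schedule `s = σ π`, where `cr = Cr π` gives the costs
of matched riders and `lamr` those of the alternative transportation. -/
def riderUtility (s : R → Option D) (νr lamr cr : R → M) (r : R) : M :=
  if s r = none then νr r - lamr r else νr r - cr r

theorem sum_riderUtility_of_none (t : Finset R) (s : R → Option D) (νr lamr cr : R → M) :
    ∑ r ∈ t with s r = none, riderUtility s νr lamr cr r =
      ∑ r ∈ t with s r = none, νr r - ∑ r ∈ t with s r = none, lamr r := by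
  rw [← Finset.sum_sub_distrib]
  exact Finset.sum_congr rfl fun r hr => if_pos (Finset.mem_filter.mp hr).2

variable [DecidableEq D]

theorem sum_riderUtility_of_some (t : Finset R) (s : R → Option D) (νr lamr cr : R → M) (d : D) :
    ∑ r ∈ t with s r = some d, riderUtility s νr lamr cr r =
      ∑ r ∈ t with s r = some d, νr r - ∑ r ∈ t with s r = some d, cr r := by
  rw [← Finset.sum_sub_distrib]
  refine Finset.sum_congr rfl fun r hr => if_neg ?_
  simp [(Finset.mem_filter.mp hr).2]

theorem sum_riderUtility [Fintype D] (t : Finset R) (s : R → Option D) (νr lamr cr : R → M) :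
    ∑ r ∈ t, riderUtility s νr lamr cr r =
      ∑ r ∈ t, νr r -
        (∑ r ∈ t with s r = none, lamr r + ∑ d, ∑ r ∈ t with s r = some d, cr r) := by
  rw [sum_eq_sum_none_add_sum_some t s (riderUtility s νr lamr cr),
    sum_eq_sum_none_add_sum_some t s νr, sum_riderUtility_of_none]
  simp only [sum_riderUtility_of_some, Finset.sum_sub_distrib]
  abel

end RiderUtility

section Welfare

variable {R D k : Type*} [Fintype R] [DecidableEq D] [Ring k]

/-- The utility `Ũ_d(π)` of an altruistic driver under the schedule `s = σ π`, where `cd = Cd π`: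
it includes `ρd d` times the utility of the riders `d` serves. -/
def driverUtility (s : R → Option D) (νr lamr : R → k) (νd ρd : D → k) (cr : R → k) (cd : D → k)
    (d : D) : k :=
  νd d - cd d + ρd d * ∑ r with s r = some d, riderUtility s νr lamr cr r

variable [Fintype D]

/-- The total welfare `W(π)` of the schedule `s = σ π`. -/
def totalWelfare (s : R → Option D) (νr lamr : R → k) (νd ρd : D → k) (cr : R → k) (cd : D → k) :
    k :=
  ∑ r, riderUtility s νr lamr cr r + ∑ d, driverUtility s νr lamr νd ρd cr cd d

/-- The modified total cost `K(π)` of the schedule `s = σ π`: a rider served by `d` contributes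
her cost with weight `1 + ρd d`, minus `ρd d` times her trip value. -/
def modifiedCost (s : R → Option D) (νr lamr : R → k) (ρd : D → k) (cr : R → k) (cd : D → k) : k :=
  ∑ d, cd d
    + ∑ d, ∑ r with s r = some d, (1 + ρd d) * cr r
    + ∑ r with s r = none, lamr r
    - ∑ d, ρd d * ∑ r with s r = some d, νr r

theorem sum_driverUtility (s : R → Option D) (νr lamr : R → k) (νd ρd : D → k) (cr : R → k)
    (cd : D → k) :
    ∑ d, driverUtility s νr lamr νd ρd cr cd d =
      ∑ d, νd d - ∑ d, cd d
        + (∑ d, ρd d * ∑ r with s r = some d, νr r - ∑ d, ρd d * ∑ r with s r = some d, cr r) := by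
  simp only [driverUtility, sum_riderUtility_of_some, mul_sub, Finset.sum_add_distrib,
    Finset.sum_sub_distrib]

theorem totalWelfare_eq_sub_modifiedCost (s : R → Option D) (νr lamr : R → k) (νd ρd : D → k)
    (cr : R → k) (cd : D → k) :
    totalWelfare s νr lamr νd ρd cr cd =
      (∑ r, νr r + ∑ d, νd d) - modifiedCost s νr lamr ρd cr cd := by
  have weighted_cost : ∑ d, ∑ r with s r = some d, (1 + ρd d) * cr r =
      ∑ d, ∑ r with s r = some d, cr r + ∑ d, ρd d * ∑ r with s r = some d, cr r := by
    simp only [← Finset.mul_sum, add_mul, one_mul, Finset.sum_add_distrib]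
  rw [totalWelfare, modifiedCost, sum_riderUtility, sum_driverUtility, weighted_cost]
  abel

end Welfare

theorem welfare_max_iff_cost_min_general {Sch R D k : Type*} [Fintype R] [Fintype D]
    [DecidableEq D] [Ring k] [Preorder k] [IsOrderedAddMonoid k]
    (σ : Sch → R → Option D) (νr lamr : R → k) (νd ρd : D → k)
    (Cr : Sch → R → k) (Cd : Sch → D → k) :
    (∀ π, totalWelfare (σ π) νr lamr νd ρd (Cr π) (Cd π) =
      (∑ r, νr r + ∑ d, νd d) - modifiedCost (σ π) νr lamr ρd (Cr π) (Cd π)) ∧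
    ∀ πstar,
      (∀ π, totalWelfare (σ π) νr lamr νd ρd (Cr π) (Cd π) ≤
        totalWelfare (σ πstar) νr lamr νd ρd (Cr πstar) (Cd πstar)) ↔
      ∀ π, modifiedCost (σ πstar) νr lamr ρd (Cr πstar) (Cd πstar) ≤
        modifiedCost (σ π) νr lamr ρd (Cr π) (Cd π) := by
  refine ⟨fun π => totalWelfare_eq_sub_modifiedCost .., fun πstar => forall_congr' fun π => ?_⟩
  simp only [totalWelfare_eq_sub_modifiedCost, sub_le_sub_iff_left]

/-- Cost minimization is equivalent to welfare maximization with
altruistic drivers: total welfare `W π` equals the constant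
`∑ r, ν r + ∑ d, ν d` minus the modified total cost `K π`, hence a schedule
maximizes welfare iff it minimizes the modified total cost. -/
theorem welfare_max_iff_cost_min
    {Sch R D : Type*} [Fintype Sch] [Nonempty Sch] [Fintype R] [Fintype D]
    [DecidableEq D]
    (σ : Sch → R → Option D)
    (νr lamr : R → ℝ) (νd ρd : D → ℝ)
    (Cr : Sch → R → ℝ) (Cd : Sch → D → ℝ)
    (U : Sch → R → ℝ)
    (hU : ∀ π r, U π r = if σ π r = none then νr r - lamr r else νr r - Cr π r)
    (Ut : Sch → D → ℝ)
    (hUt : ∀ π d, Ut π d = νd d - Cd π d +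
      ρd d * ∑ r ∈ Finset.univ.filter (fun r => σ π r = some d), U π r)
    (W : Sch → ℝ)
    (hW : ∀ π, W π = (∑ r, U π r) + ∑ d, Ut π d)
    (K : Sch → ℝ)
    (hK : ∀ π, K π = (∑ d, Cd π d)
      + (∑ d, ∑ r ∈ Finset.univ.filter (fun r => σ π r = some d), (1 + ρd d) * Cr π r)
      + (∑ r ∈ Finset.univ.filter (fun r => σ π r = none), lamr r)
      - ∑ d, ρd d * ∑ r ∈ Finset.univ.filter (fun r => σ π r = some d), νr r) :
    (∀ π, W π = ((∑ r, νr r) + ∑ d, νd d) - K π) ∧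
    ∀ πstar : Sch, (∀ π, W π ≤ W πstar) ↔ (∀ π, K πstar ≤ K π) := by
  cases funext₂ hU; cases funext₂ hUt; cases funext hW; cases funext hK
  exact welfare_max_iff_cost_min_general σ νr lamr νd ρd Cr Cd
end
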